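/- Let u(x) = (x₁ + i x₂)/|x₁ + i x₂| for x = (x₁,x₂) ∈ ℝ² ∖ {0}. For all y₁, y₂ ∈ ℝ², the function x ↦ (1 − u(x)·conj(u(y₁+x)))·(1 − u(y₁+x)·conj(u(y₂+x)))·(1 − u(y₂+x)·conj(u(x))) is Lebesgue integrable on ℝ², and ∫_{ℝ²} (1 − u(x)conj(u(y₁+x)))(1 − u(y₁+x)conj(u(y₂+x)))(1 − u(y₂+x)conj(u(x))) dx = 2πi·(y₁ ∧ y₂), where y ∧ z = y₁z₂ − y₂z₁. -/

import Mathlib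

open MeasureTheory

/-!
Write `p = u(x) conj(u(y₁ + x))` and `q`, `r` for the other two phases. As `|p| = |q| = |r| = 1` and
`p q r = 1`, the integrand `(1 - p) (1 - q) (1 - r)` is `2i` times the sum of the sines of the
oriented angles that the sides of the triangle `x, y₁ + x, y₂ + x` subtend at the origin. Each
difference `θ - sin θ` is `O(‖x‖⁻³)`, hence integrable, and integrates to zero because the point
reflection exchanging the two ends of the side reverses the angle. So each `sin θ` may be replaced
by `θ`, and the sum of the angles is `±2π` if the triangle contains the origin and `0` otherwise:
its integral is `2π` times the signed area `(y₁ ∧ y₂) / 2` of the triangle.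
-/

section Angle

open Real InnerProductGeometry

lemma norm_mul_angle_le {V : Type*} [NormedAddCommGroup V] [InnerProductSpace ℝ V] (x y : V) :
    ‖x‖ * angle x y ≤ π * ‖x - y‖ := by
  rcases le_total (angle x y) (π / 2) with hacute | hobtuse
  · have hJordan : 2 / π * angle x y ≤ sin (angle x y) := mul_le_sin (angle_nonneg x y) hacute
    have hsine : sin (angle x y) * ‖x‖ ≤ ‖x - y‖ := by
      rw [sin_angle_mul_norm_eq_sin_angle_mul_norm]
      exact mul_le_of_le_one_left (norm_nonneg _) (sin_le_one _)
    calc ‖x‖ * angle x y = π / 2 * (2 / π * angle x y * ‖x‖) := by field_simp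
      _ ≤ π / 2 * ‖x - y‖ := by gcongr; exact le_trans (by gcongr) hsine
      _ ≤ π * ‖x - y‖ := by gcongr; exact half_le_self pi_pos.le
  · have hcos : cos (angle x y) ≤ 0 :=
      cos_nonpos_of_pi_div_two_le_of_le hobtuse ((angle_le_pi x y).trans (by linarith [pi_pos]))
    have hnorm : ‖x‖ ≤ ‖x - y‖ := by
      have hlaw := norm_sub_sq_eq_norm_sq_add_norm_sq_sub_two_mul_norm_mul_norm_mul_cos_angle x y
      refine (sq_le_sq₀ (norm_nonneg _) (norm_nonneg _)).1 ?_
      nlinarith [mul_nonneg (mul_nonneg (norm_nonneg x) (norm_nonneg y)) (neg_nonneg.2 hcos),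
        sq_nonneg ‖y‖]
    calc ‖x‖ * angle x y ≤ ‖x - y‖ * π :=
          mul_le_mul hnorm (angle_le_pi x y) (angle_nonneg x y) (norm_nonneg _)
      _ = π * ‖x - y‖ := mul_comm _ _

/-- The odd, cubically small part `θ - sin θ` of an angle, with `θ` represented in `(-π, π]`. -/
noncomputable def sinDefect (θ : Angle) : ℝ := θ.toReal - θ.sin

lemma sinDefect_neg {θ : Angle} (hθ : θ ≠ π) : sinDefect (-θ) = -sinDefect θ := by
  rw [sinDefect, sinDefect, Angle.toReal_neg_eq_neg_toReal_iff.2 hθ, Angle.sin_neg]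
  ring

lemma abs_sinDefect_le (θ : Angle) : |sinDefect θ| ≤ |θ.toReal| ^ 3 / 6 := by
  rw [sinDefect, ← Angle.sin_toReal]
  exact abs_sub_sin_le _

-- The sum lies in `2πℤ` and in `(-3π, 3π)`; the values `±2π` force all summands to have that sign.
lemma toReal_add_toReal_add_toReal {α β γ : Angle} (hsum : α + β + γ = 0)
    (hα : α ≠ π) (hβ : β ≠ π) (hγ : γ ≠ π) :
    α.toReal + β.toReal + γ.toReal =
      (if 0 < α.toReal ∧ 0 < β.toReal ∧ 0 < γ.toReal then 2 * π else 0) -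
        (if α.toReal < 0 ∧ β.toReal < 0 ∧ γ.toReal < 0 then 2 * π else 0) := by
  obtain ⟨k, hk⟩ : ∃ k : ℤ, k • (2 * π) = α.toReal + β.toReal + γ.toReal := by
    rw [← Angle.coe_eq_zero_iff]
    simpa only [Angle.coe_add, Angle.coe_toReal] using hsum
  have lt_pi {θ : Angle} (hθ : θ ≠ π) : θ.toReal < π :=
    θ.toReal_le_pi.lt_of_ne (mt Angle.toReal_eq_pi_iff.1 hθ)
  have hα' := lt_pi hα
  have hβ' := lt_pi hβ
  have hγ' := lt_pi hγ
  have hα'' := α.neg_pi_lt_toReal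
  have hβ'' := β.neg_pi_lt_toReal
  have hγ'' := γ.neg_pi_lt_toReal
  rw [zsmul_eq_mul] at hk
  have hk_lt : k < 2 := by
    have : (k : ℝ) < 2 := by nlinarith
    exact_mod_cast this
  have lt_hk : -2 < k := by
    have : (-2 : ℝ) < k := by nlinarith
    exact_mod_cast this
  obtain rfl | rfl | rfl : k = -1 ∨ k = 0 ∨ k = 1 := by omega
  all_goals push_cast at hk
  · rw [if_neg (by rintro ⟨_, _, _⟩; linarith),
      if_pos ⟨by linarith, by linarith, by linarith⟩]
    linarith
  · rw [if_neg (by rintro ⟨_, _, _⟩; linarith), if_neg (by rintro ⟨_, _, _⟩; linarith)]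
    linarith
  · rw [if_pos ⟨by linarith, by linarith, by linarith⟩,
      if_neg (by rintro ⟨_, _, _⟩; linarith)]
    linarith

end Angle

lemma volume_re_pos_im_pos_re_add_im_lt {r : ℝ} (hr : 0 ≤ r) :
    volume {z : ℂ | 0 < z.re ∧ 0 < z.im ∧ z.re + z.im < r} = ENNReal.ofReal (r ^ 2 / 2) := by
  have hregion : {z : ℂ | 0 < z.re ∧ 0 < z.im ∧ z.re + z.im < r} =
      Complex.measurableEquivRealProd ⁻¹'
        regionBetween (fun _ => 0) (fun s => r - s) (Set.Ioo 0 r) := by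
    ext z
    simp only [regionBetween, Set.mem_ofPred_eq, Set.mem_preimage, Set.mem_Ioo,
      Complex.measurableEquivRealProd_apply]
    constructor
    · rintro ⟨hre, him, hsum⟩
      exact ⟨⟨hre, by linarith⟩, him, by linarith⟩
    · rintro ⟨⟨hre, -⟩, him, hsum⟩
      exact ⟨hre, him, by linarith⟩
  have hint : IntegrableOn (fun s => r - s) (Set.Ioo 0 r) :=
    ((by fun_prop : Continuous fun s : ℝ => r - s).integrableOn_Icc).mono_set
      Set.Ioo_subset_Icc_self
  rw [hregion, Complex.volume_preserving_equiv_real_prod.measure_preimage_equiv,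
    Measure.volume_eq_prod, volume_regionBetween_eq_integral (by simp) hint measurableSet_Ioo
      fun s hs => sub_nonneg.2 hs.2.le,
    ← integral_Ioc_eq_integral_Ioo, ← intervalIntegral.integral_of_le hr]
  congr 1
  simp only [Pi.sub_apply, sub_zero]
  rw [intervalIntegral.integral_sub (by simp) (by simp), intervalIntegral.integral_const,
    integral_id, smul_eq_mul]
  ring

lemma ae_add_ne_zero {G : Type*} [AddGroup G] [MeasurableSpace G] (μ : Measure G)
    [NullSingletonClass μ] (g : G) : ∀ᵐ x ∂μ, x + g ≠ 0 := by
  simpa [eq_neg_iff_add_eq_zero] using μ.ae_ne (-g)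

section OrientedPlane

open Real InnerProductGeometry Module

variable {V : Type*} [NormedAddCommGroup V] [InnerProductSpace ℝ V] [Fact (finrank ℝ V = 2)]
  (o : Orientation ℝ V (Fin 2))

local notation "ω" => o.areaForm

attribute [local instance] FiniteDimensional.of_fact_finrank_eq_two

lemma abs_toReal_oangle_le_angle (x y : V) : |(o.oangle x y).toReal| ≤ angle x y := by
  by_cases hx : x = 0
  · simpa [hx] using pi_div_two_pos.le
  by_cases hy : y = 0
  · simpa [hy] using pi_div_two_pos.le
  exact (o.angle_eq_abs_oangle_toReal hx hy).ge

lemma areaForm_eq_norm_mul_norm_mul_sin_oangle (x y : V) :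
    ω x y = ‖x‖ * ‖y‖ * (o.oangle x y).sin := by
  by_cases hx : x = 0
  · simp [hx]
  by_cases hy : y = 0
  · simp [hy]
  rw [Orientation.oangle, Angle.sin_coe, Complex.sin_arg, o.norm_kahler, o.kahler_apply_apply]
  simp [field]

lemma sign_areaForm (x y : V) : SignType.sign (ω x y) = (o.oangle x y).sign := by
  by_cases hx : x = 0
  · simp [hx]
  by_cases hy : y = 0
  · simp [hy]
  rw [areaForm_eq_norm_mul_norm_mul_sin_oangle, sign_mul, sign_pos (by positivity), one_mul,
    Angle.sign]

lemma areaForm_normalize_normalize (x y : V) :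
    ω (NormedSpace.normalize x) (NormedSpace.normalize y) = (o.oangle x y).sin := by
  by_cases hx : x = 0
  · simp [hx]
  by_cases hy : y = 0
  · simp [hy]
  simp [NormedSpace.normalize, areaForm_eq_norm_mul_norm_mul_sin_oangle o x y, field]

lemma toReal_oangle_pos_iff {x y : V} (h : o.oangle x y ≠ π) :
    0 < (o.oangle x y).toReal ↔ 0 < ω x y := by
  rw [← sign_eq_one_iff, Angle.sign_toReal h, ← sign_areaForm, sign_eq_one_iff]

lemma toReal_oangle_neg_iff {x y : V} : (o.oangle x y).toReal < 0 ↔ 0 < ω y x := by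
  rw [Angle.toReal_neg_iff_sign_neg, ← sign_areaForm, sign_eq_neg_one_iff, o.areaForm_swap y x,
    neg_pos]

/-- The sum of the oriented angles `∠(x + a, x + b)`, `∠(x + b, x + c)`, `∠(x + c, x + a)`, each
represented in `(-π, π]`. When no side passes through the origin, this is `2π` times the winding
number around `0` of the triangle with vertices `x + a`, `x + b`, `x + c`. -/
noncomputable def windingAngle (a b c x : V) : ℝ :=
  (o.oangle (x + a) (x + b)).toReal + (o.oangle (x + b) (x + c)).toReal +
    (o.oangle (x + c) (x + a)).toReal

/-- The sum of the sines of the three angles whose sum is `windingAngle o a b c x`. -/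
noncomputable def windingSine (a b c x : V) : ℝ :=
  (o.oangle (x + a) (x + b)).sin + (o.oangle (x + b) (x + c)).sin +
    (o.oangle (x + c) (x + a)).sin

lemma windingSine_eq_windingAngle_sub (a b c : V) :
    windingSine o a b c = fun x => windingAngle o a b c x -
      (sinDefect (o.oangle (x + a) (x + b)) + sinDefect (o.oangle (x + b) (x + c)) +
        sinDefect (o.oangle (x + c) (x + a))) := by
  ext x
  simp only [windingSine, windingAngle, sinDefect]
  ring

/-- The translations `x` for which `x + a`, `x + b`, `x + c` are the vertices of a positively
oriented triangle with `0` in its interior. -/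
def windingRegion (a b c : V) : Set V :=
  {x | 0 < ω (x + a) (x + b) ∧ 0 < ω (x + b) (x + c) ∧ 0 < ω (x + c) (x + a)}

lemma areaForm_add_areaForm_add_areaForm (a b c x : V) :
    ω (x + a) (x + b) + ω (x + b) (x + c) + ω (x + c) (x + a) = ω (b - a) (c - a) := by
  simp only [map_add, map_sub, LinearMap.add_apply, LinearMap.sub_apply, o.areaForm_apply_self]
  linarith [o.areaForm_swap a b, o.areaForm_swap a c, o.areaForm_swap x a, o.areaForm_swap x b,
    o.areaForm_swap x c]

lemma windingRegion_eq_empty {a b c : V} (h : ω (b - a) (c - a) ≤ 0) :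
    windingRegion o a b c = ∅ := by
  refine Set.eq_empty_of_forall_notMem fun x ⟨hab, hbc, hca⟩ => ?_
  linarith [areaForm_add_areaForm_add_areaForm o a b c x]

attribute [local instance] Complex.finrank_real_complex_fact

lemma exists_linearIsometryEquiv_complex_areaForm :
    ∃ f : V ≃ₗᵢ[ℝ] ℂ, ∀ x y, ω x y = Complex.orientation.areaForm (f x) (f y) := by
  let e := o.finOrthonormalBasis two_pos (Fact.out (p := finrank ℝ V = 2))
  let f := e.equiv Complex.orthonormalBasisOneI (Equiv.refl _)
  have hf : Orientation.map (Fin 2) f.toLinearEquiv o = Complex.orientation := by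
    calc Orientation.map (Fin 2) f.toLinearEquiv o
        = Orientation.map (Fin 2) f.toLinearEquiv e.toBasis.orientation := by
          rw [o.finOrthonormalBasis_orientation]
      _ = (e.map f).toBasis.orientation := by
          rw [← Basis.orientation_map, OrthonormalBasis.toBasis_map]
      _ = Complex.orthonormalBasisOneI.toBasis.orientation := by
          exact congrArg Basis.orientation (Basis.eq_of_apply_eq fun i => by simp [f])
      _ = Complex.orientation := by
          rw [Complex.toBasis_orthonormalBasisOneI, Complex.orientation]
  exact ⟨f, fun x y => by rw [Complex.areaForm, o.areaForm_map_complex f hf]⟩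

variable [MeasurableSpace V] [BorelSpace V]

lemma measurable_toReal_oangle {X : Type*} [MeasurableSpace X] {f g : X → V} (hf : Measurable f)
    (hg : Measurable g) : Measurable fun x => (o.oangle (f x) (g x)).toReal := by
  have hkahler : Continuous fun p : V × V => o.kahler p.1 p.2 := by
    have hω : Continuous fun p : V × V => ω p.1 p.2 :=
      (o.areaForm'.continuous.comp continuous_fst).clm_apply continuous_snd
    simp only [o.kahler_apply_apply]
    fun_prop
  simp only [Orientation.oangle, Complex.arg_coe_angle_toReal_eq_arg]
  exact (hkahler.measurable.comp (hf.prodMk hg)).carg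

section Haar

variable (μ : Measure V) [μ.IsAddHaarMeasure]

lemma ae_areaForm_ne_zero {v : V} (hv : v ≠ 0) : ∀ᵐ x ∂μ, ω v x ≠ 0 := by
  have hker : LinearMap.ker (ω v) ≠ ⊤ := fun htop => hv <| by
    simpa using LinearMap.congr_fun (LinearMap.ker_eq_top.1 htop) (o.rightAngleRotation v)
  have hnull := Measure.addHaar_submodule μ _ hker
  rwa [← compl_mem_ae_iff] at hnull

lemma ae_oangle_add_add_ne_pi (a b : V) : ∀ᵐ x ∂μ, o.oangle (x + a) (x + b) ≠ π := by
  rcases eq_or_ne a b with rfl | hab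
  · simp [Angle.pi_ne_zero.symm]
  have htranslate := (measurePreserving_add_right μ a).quasiMeasurePreserving.ae
    (ae_areaForm_ne_zero o μ (sub_ne_zero.2 hab))
  filter_upwards [htranslate] with x hx hpi
  apply hx
  calc ω (a - b) (x + a) = ω ((x + a) - (x + b)) (x + a) := by rw [add_sub_add_left_eq_sub]
    _ = ω (x + a) (x + b) := by
      rw [map_sub, LinearMap.sub_apply, o.areaForm_apply_self, zero_sub, ← o.areaForm_swap]
    _ = 0 := by
      rw [areaForm_eq_norm_mul_norm_mul_sin_oangle, hpi, Angle.sin_coe_pi, mul_zero]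

lemma integrable_sinDefect_oangle (a b : V) :
    Integrable (fun x => sinDefect (o.oangle (x + a) (x + b))) μ := by
  have hbracket : Integrable (fun x : V => (1 + ‖x + a‖) ^ (-3 : ℝ)) μ :=
    (integrable_one_add_norm (by rw [Fact.out (p := finrank ℝ V = 2)]; norm_num)).comp_add_right a
  refine (hbracket.const_mul ((π + π * ‖a - b‖) ^ 3)).mono' ?_ (.of_forall fun x => ?_)
  · have hθ : Measurable fun x => (o.oangle (x + a) (x + b)).toReal :=
      measurable_toReal_oangle o (by fun_prop) (by fun_prop)
    simp only [sinDefect, ← Angle.sin_toReal]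
    exact (hθ.sub (measurable_sin.comp hθ)).aestronglyMeasurable
  set θ := o.oangle (x + a) (x + b)
  have hdecay : |θ.toReal| * (1 + ‖x + a‖) ≤ π + π * ‖a - b‖ := by
    have hangle : ‖x + a‖ * |θ.toReal| ≤ π * ‖a - b‖ := by
      calc ‖x + a‖ * |θ.toReal| ≤ ‖x + a‖ * angle (x + a) (x + b) := by
            gcongr; exact abs_toReal_oangle_le_angle o _ _
        _ ≤ π * ‖a - b‖ := by simpa using norm_mul_angle_le (x + a) (x + b)
    linarith [θ.abs_toReal_le_pi]
  have hpow : (1 + ‖x + a‖) ^ (-3 : ℝ) = ((1 + ‖x + a‖) ^ 3)⁻¹ := by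
    rw [rpow_neg (by positivity)]
    norm_cast
  rw [norm_eq_abs, hpow, ← div_eq_mul_inv, le_div_iff₀ (by positivity)]
  calc |sinDefect θ| * (1 + ‖x + a‖) ^ 3
      ≤ |θ.toReal| ^ 3 * (1 + ‖x + a‖) ^ 3 := by
        gcongr
        exact (abs_sinDefect_le θ).trans (div_le_self (by positivity) (by norm_num))
    _ = (|θ.toReal| * (1 + ‖x + a‖)) ^ 3 := (mul_pow _ _ _).symm
    _ ≤ (π + π * ‖a - b‖) ^ 3 := by gcongr

-- The measure-preserving involution `x ↦ -(a + b) - x` reverses the angle.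
lemma integral_sinDefect_oangle (a b : V) :
    ∫ x, sinDefect (o.oangle (x + a) (x + b)) ∂μ = 0 := by
  have hreverse (x : V) : o.oangle (-(a + b) - x + a) (-(a + b) - x + b) =
      -o.oangle (x + a) (x + b) := by
    rw [← o.oangle_rev, ← o.oangle_neg_neg (x + b)]
    congr 1 <;> abel
  have hodd : ∫ x, sinDefect (o.oangle (x + a) (x + b)) ∂μ =
      -∫ x, sinDefect (o.oangle (x + a) (x + b)) ∂μ := by
    rw [← integral_neg, ← integral_sub_left_eq_self _ μ (-(a + b))]
    refine integral_congr_ae ?_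
    filter_upwards [ae_oangle_add_add_ne_pi o μ a b] with x hx
    rw [hreverse, sinDefect_neg hx]
  exact self_eq_neg.1 hodd

end Haar


lemma measurableSet_windingRegion (a b c : V) : MeasurableSet (windingRegion o a b c) := by
  have hω (u v : V) : Continuous fun x => ω (x + u) (x + v) :=
    (o.areaForm'.continuous.comp (continuous_add_const u)).clm_apply (continuous_add_const v)
  exact ((isOpen_lt continuous_const (hω a b)).inter ((isOpen_lt continuous_const (hω b c)).inter
    (isOpen_lt continuous_const (hω c a)))).measurableSet

lemma windingAngle_ae_eq (μ : Measure V) [μ.IsAddHaarMeasure] (a b c : V) :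
    windingAngle o a b c =ᵐ[μ] (windingRegion o a b c).indicator (fun _ => 2 * π) -
      (windingRegion o c b a).indicator (fun _ => 2 * π) := by
  have : Nontrivial V :=
    nontrivial_of_finrank_eq_succ (n := 1) (Fact.out (p := finrank ℝ V = 2))
  filter_upwards [ae_add_ne_zero μ a, ae_add_ne_zero μ b, ae_add_ne_zero μ c,
    ae_oangle_add_add_ne_pi o μ a b, ae_oangle_add_add_ne_pi o μ b c,
    ae_oangle_add_add_ne_pi o μ c a] with x ha hb hc hab hbc hca
  rw [windingAngle, toReal_add_toReal_add_toReal (o.oangle_add_cyc3 ha hb hc) hab hbc hca]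
  simp only [toReal_oangle_pos_iff o hab, toReal_oangle_pos_iff o hbc, toReal_oangle_pos_iff o hca,
    toReal_oangle_neg_iff, Pi.sub_apply, Set.indicator_apply, windingRegion, Set.mem_ofPred_eq]
  simp only [and_left_comm (a := 0 < ω (x + b) (x + a))]


-- `s = ω x a` and `t = ω b x` are linear coordinates carrying the region to
-- `{0 < s, 0 < t, s + t < ω a b}`, with Jacobian determinant `-ω a b`.
lemma volume_windingRegion_complex_zero {a b : ℂ} (hab : 0 < Complex.orientation.areaForm a b) :
    volume (windingRegion Complex.orientation 0 a b) =
      ENNReal.ofReal (Complex.orientation.areaForm a b / 2) := by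
  set r := Complex.orientation.areaForm a b with hr
  let M : Matrix (Fin 2) (Fin 2) ℝ := !![a.im, -a.re; -b.im, b.re]
  let φ : ℂ →ₗ[ℝ] ℂ := Matrix.toLin Complex.basisOneI Complex.basisOneI M
  have hω (w z : ℂ) : Complex.orientation.areaForm w z = w.re * z.im - w.im * z.re := by
    rw [Complex.areaForm, Complex.mul_im, Complex.conj_re, Complex.conj_im]
    ring
  have hφ (z : ℂ) : φ z = ⟨Complex.orientation.areaForm z a, Complex.orientation.areaForm b z⟩ := by
    apply Complex.ext <;>
      simp [φ, M, hω, Matrix.toLin_apply, Matrix.mulVec, dotProduct, Fin.sum_univ_two, mul_comm,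
        sub_eq_neg_add, add_comm]
  have hdet : LinearMap.det φ = -r := by
    rw [LinearMap.det_toLin, Matrix.det_fin_two_of, hr, hω]
    ring
  have hpreimage : windingRegion Complex.orientation 0 a b =
      φ ⁻¹' {z : ℂ | 0 < z.re ∧ 0 < z.im ∧ z.re + z.im < r} := by
    ext z
    have hsum := areaForm_add_areaForm_add_areaForm Complex.orientation 0 a b z
    simp only [add_zero, sub_zero, map_add, LinearMap.add_apply,
      Complex.orientation.areaForm_apply_self, zero_add] at hsum
    simp only [windingRegion, Set.mem_ofPred_eq, Set.mem_preimage, hφ, add_zero, map_add,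
      LinearMap.add_apply, Complex.orientation.areaForm_apply_self, zero_add]
    constructor
    · rintro ⟨hs, hrest, ht⟩
      exact ⟨hs, ht, by linarith [Complex.orientation.areaForm_swap z a]⟩
    · rintro ⟨hs, ht, hlt⟩
      exact ⟨hs, by linarith [Complex.orientation.areaForm_swap z a], ht⟩
  rw [hpreimage, Measure.addHaar_preimage_linearMap _ (by rw [hdet]; exact (neg_neg_of_pos hab).ne),
    volume_re_pos_im_pos_re_add_im_lt hab.le, hdet, ← ENNReal.ofReal_mul (by positivity), abs_inv,
    abs_neg, abs_of_pos hab]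
  congr 1
  field_simp

lemma volume_windingRegion (a b c : V) :
    volume (windingRegion o a b c) = ENNReal.ofReal (ω (b - a) (c - a) / 2) := by
  rcases le_or_gt (ω (b - a) (c - a)) 0 with hneg | hpos
  · rw [windingRegion_eq_empty o hneg, measure_empty, ENNReal.ofReal_of_nonpos (by linarith)]
  obtain ⟨f, hf⟩ := exists_linearIsometryEquiv_complex_areaForm o
  have hpreimage : windingRegion o a b c =
      (· + a) ⁻¹' (f ⁻¹' windingRegion Complex.orientation 0 (f (b - a)) (f (c - a))) := by
    ext x
    simp only [windingRegion, Set.mem_ofPred_eq, Set.mem_preimage, hf, ← map_add, add_zero]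
    simp
  rw [hf] at hpos ⊢
  rw [hpreimage, measure_preimage_add_right, f.measurePreserving.measure_preimage
    (measurableSet_windingRegion _ _ _ _).nullMeasurableSet, volume_windingRegion_complex_zero hpos]

lemma integrable_indicator_windingRegion (a b c : V) (t : ℝ) :
    Integrable ((windingRegion o a b c).indicator fun _ => t) :=
  (integrable_indicator_iff (measurableSet_windingRegion o a b c)).2 <|
    integrableOn_const (by simp [volume_windingRegion])

lemma integral_indicator_windingRegion (a b c : V) (t : ℝ) :
    ∫ x, (windingRegion o a b c).indicator (fun _ => t) x = max (ω (b - a) (c - a) / 2) 0 * t := by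
  rw [integral_indicator_const t (measurableSet_windingRegion o a b c), Measure.real,
    volume_windingRegion, ENNReal.toReal_ofReal', smul_eq_mul]

lemma integrable_windingAngle (a b c : V) : Integrable (windingAngle o a b c) :=
  ((integrable_indicator_windingRegion o a b c _).sub
    (integrable_indicator_windingRegion o c b a _)).congr (windingAngle_ae_eq o volume a b c).symm

lemma integral_windingAngle (a b c : V) :
    ∫ x, windingAngle o a b c x = π * ω (b - a) (c - a) := by
  have hswap : ω (b - c) (a - c) = -ω (b - a) (c - a) := by
    simp only [map_sub, LinearMap.sub_apply, o.areaForm_apply_self]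
    linarith [o.areaForm_swap a b, o.areaForm_swap a c, o.areaForm_swap b c]
  rw [integral_congr_ae (windingAngle_ae_eq o volume a b c)]
  simp only [Pi.sub_apply]
  rw [integral_sub (integrable_indicator_windingRegion o a b c _)
      (integrable_indicator_windingRegion o c b a _), integral_indicator_windingRegion,
    integral_indicator_windingRegion, hswap, ← sub_mul, neg_div,
    max_zero_sub_max_neg_zero_eq_self]
  ring

lemma integrable_windingSine (a b c : V) : Integrable (windingSine o a b c) := by
  rw [windingSine_eq_windingAngle_sub]
  exact (integrable_windingAngle o a b c).sub <|
    ((integrable_sinDefect_oangle o volume a b).add (integrable_sinDefect_oangle o volume b c)).add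
      (integrable_sinDefect_oangle o volume c a)

lemma integral_windingSine (a b c : V) :
    ∫ x, windingSine o a b c x = π * ω (b - a) (c - a) := by
  have hab := integrable_sinDefect_oangle o volume a b
  have hbc := integrable_sinDefect_oangle o volume b c
  have hca := integrable_sinDefect_oangle o volume c a
  simp only [windingSine_eq_windingAngle_sub]
  rw [integral_sub (integrable_windingAngle o a b c) ((hab.fun_add hbc).fun_add hca),
    integral_add (hab.fun_add hbc) hca, integral_add hab hbc]
  simp only [integral_sinDefect_oangle, integral_windingAngle, add_zero, sub_zero]

end OrientedPlane

section Complex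

open Complex ComplexConjugate

lemma one_sub_mul_conj_mul_one_sub_mul_conj_mul_one_sub_mul_conj {p q r : ℂ} (hp : ‖p‖ = 1)
    (hq : ‖q‖ = 1) (hr : ‖r‖ = 1) :
    (1 - p * conj q) * (1 - q * conj r) * (1 - r * conj p) =
      2 * I * ((conj p * q).im + (conj q * r).im + (conj r * p).im : ℝ) := by
  have im_eq (z w : ℂ) : 2 * I * ((conj z * w).im : ℂ) = conj z * w - z * conj w := by
    rw [mul_right_comm, ← ofReal_ofNat, ← ofReal_mul, ← sub_conj, map_mul, conj_conj]
  have hp' : p * conj p = 1 := by simp [mul_conj', hp]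
  have hq' : q * conj q = 1 := by simp [mul_conj', hq]
  have hr' : r * conj r = 1 := by simp [mul_conj', hr]
  rw [ofReal_add, ofReal_add, mul_add, mul_add, im_eq, im_eq, im_eq]
  linear_combination (r * conj q - q * conj q * r * conj r) * hp' +
    (p * conj r - r * conj r) * hq' + (q * conj p - 1) * hr'

/-- The product `(1 - u(x + a) conj(u(x + b))) (1 - u(x + b) conj(u(x + c)))
(1 - u(x + c) conj(u(x + a)))` of the phase `u(z) = z / ‖z‖`. -/
noncomputable def phaseProduct (a b c x : ℂ) : ℂ :=
  (1 - NormedSpace.normalize (x + a) * conj (NormedSpace.normalize (x + b))) *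
    (1 - NormedSpace.normalize (x + b) * conj (NormedSpace.normalize (x + c))) *
    (1 - NormedSpace.normalize (x + c) * conj (NormedSpace.normalize (x + a)))

attribute [local instance] finrank_real_complex_fact

lemma phaseProduct_ae_eq (a b c : ℂ) :
    phaseProduct a b c =ᵐ[volume]
      fun x => 2 * I * (windingSine Complex.orientation a b c x : ℂ) := by
  filter_upwards [ae_add_ne_zero volume a, ae_add_ne_zero volume b, ae_add_ne_zero volume c]
    with x ha hb hc
  rw [phaseProduct, one_sub_mul_conj_mul_one_sub_mul_conj_mul_one_sub_mul_conj
    (NormedSpace.norm_normalize ha) (NormedSpace.norm_normalize hb) (NormedSpace.norm_normalize hc)]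
  simp only [windingSine, ← areaForm_normalize_normalize, Complex.areaForm]

lemma integrable_phaseProduct (a b c : ℂ) : Integrable (phaseProduct a b c) :=
  ((integrable_windingSine Complex.orientation a b c).ofReal.const_mul _).congr
    (phaseProduct_ae_eq a b c).symm

lemma integral_phaseProduct (a b c : ℂ) :
    ∫ x, phaseProduct a b c x = 2 * Real.pi * I * (conj (b - a) * (c - a)).im := by
  rw [integral_congr_ae (phaseProduct_ae_eq a b c), integral_const_mul, integral_complex_ofReal,
    integral_windingSine, Complex.areaForm]
  push_cast
  ring

end Complex

/-- The geometric identity for the winding phase `u(x) = (x₁+ix₂)/|x₁+ix₂|` on `ℝ²`: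
for all `y₁, y₂ ∈ ℝ²`, the function
`x ↦ (1 − u(x)conj u(y₁+x))(1 − u(y₁+x)conj u(y₂+x))(1 − u(y₂+x)conj u(x))`
is integrable and its integral equals `2πi (y₁ ∧ y₂)`. -/
theorem winding_phase_integral (y₁ y₂ : ℝ × ℝ) :
    let u : ℝ × ℝ → ℂ := fun x =>
      ((x.1 : ℂ) + (x.2 : ℂ) * Complex.I) / ‖(x.1 : ℂ) + (x.2 : ℂ) * Complex.I‖
    let f : ℝ × ℝ → ℂ := fun x =>
      (1 - u x * (starRingEnd ℂ) (u (y₁ + x))) *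
        (1 - u (y₁ + x) * (starRingEnd ℂ) (u (y₂ + x))) *
        (1 - u (y₂ + x) * (starRingEnd ℂ) (u x))
    Integrable f ∧
      ∫ x : ℝ × ℝ, f x
        = 2 * Real.pi * Complex.I * ((y₁.1 * y₂.2 - y₁.2 * y₂.1 : ℝ) : ℂ) := by
  intro u f
  let e := Complex.measurableEquivRealProd.symm
  have he : MeasurePreserving e := Complex.volume_preserving_equiv_real_prod.symm
  have hu (x : ℝ × ℝ) : u x = NormedSpace.normalize (e x) := by
    have he_apply : e x = x.1 + x.2 * Complex.I := Complex.mk_eq_add_mul_I _ _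
    rw [NormedSpace.normalize, he_apply, Complex.real_smul, Complex.ofReal_inv, ← div_eq_inv_mul]
  have he_add (y x : ℝ × ℝ) : e (y + x) = e x + e y := by rw [add_comm]; rfl
  have hf : f = phaseProduct 0 (e y₁) (e y₂) ∘ e := by
    ext x
    simp only [f, hu, he_add, phaseProduct, Function.comp_apply, add_zero]
  rw [hf, he.integrable_comp_emb e.measurableEmbedding]
  refine ⟨integrable_phaseProduct _ _ _, ?_⟩
  simp only [Function.comp_apply]
  rw [he.integral_comp e.measurableEmbedding, integral_phaseProduct]
  simp [e, sub_eq_add_neg]
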